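/- Every NDoT-optimal schedule is complete and WDT-optimal: if L is NDoT-optimal, then every configuration in K_BC has a discovery time under L and this discovery time is at most max(B)·|C| − 1. -/

import Mathlib

open scoped Classical

/-- A listening schedule over channel set `C`: a set of (channel, time-slot) pairs
such that all scanned channels belong to `C` and at most one channel is scanned
per time slot. -/
def IsSchedule (C : Finset ℕ) (L : Set (ℕ × ℕ)) : Prop :=
  (∀ p ∈ L, p.1 ∈ C) ∧ ∀ c c' t : ℕ, (c, t) ∈ L → (c', t) ∈ L → c = c'

/-- Configuration `(c, b, δ)` is discovered at time slot `t` by the schedule `L`. -/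
def DiscoveredAt (L : Set (ℕ × ℕ)) (c b δ t : ℕ) : Prop :=
  (c, t) ∈ L ∧ t % b = δ

/-- The discovery time `T_κ(L)` of configuration `κ = (c, b, δ)`: the least time slot
at which it is discovered (junk value `0` if it is never discovered). -/
noncomputable def discTime (L : Set (ℕ × ℕ)) (c b δ : ℕ) : ℕ :=
  sInf {t | DiscoveredAt L c b δ t}

/-- A schedule is complete if every configuration in `K_BC` is discovered at some slot. -/
def Complete (C B : Finset ℕ) (L : Set (ℕ × ℕ)) : Prop :=
  ∀ c ∈ C, ∀ b ∈ B, ∀ δ < b, ∃ t, DiscoveredAt L c b δ t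

/-- The set of all configurations `K_BC`, as a finite set of triples `(c, b, δ)`. -/
def KBC (C B : Finset ℕ) : Finset (ℕ × ℕ × ℕ) :=
  (C ×ˢ B ×ˢ Finset.range (B.sup id)).filter fun κ => κ.2.2 < κ.2.1

/-- The weight `P_κ = 1/(b·|B|·|C|)` of a configuration with beacon period `b`. -/
noncomputable def weight (C B : Finset ℕ) (b : ℕ) : ℝ :=
  (1 : ℝ) / ((b : ℝ) * (B.card : ℝ) * (C.card : ℝ))

/-- Total weight of configurations discovered by `L` at some slot `≤ t` (the NDoT curve). -/
noncomputable def discSum (C B : Finset ℕ) (L : Set (ℕ × ℕ)) (t : ℕ) : ℝ :=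
  ∑ κ ∈ (KBC C B).filter (fun κ => ∃ t' ≤ t, DiscoveredAt L κ.1 κ.2.1 κ.2.2 t'),
    weight C B κ.2.1

/-- The mean discovery time `MDT(L) = Σ_{κ ∈ K_BC} P_κ · T_κ(L)`. -/
noncomputable def MDT (C B : Finset ℕ) (L : Set (ℕ × ℕ)) : ℝ :=
  ∑ κ ∈ KBC C B, weight C B κ.2.1 * (discTime L κ.1 κ.2.1 κ.2.2 : ℝ)

/-- A schedule is recursive if it is complete and, for every `b ∈ B`, every
configuration with beacon period `b` has discovery time at most `b·|C| - 1`. -/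
def Recursive (C B : Finset ℕ) (L : Set (ℕ × ℕ)) : Prop :=
  Complete C B L ∧
  ∀ c ∈ C, ∀ b ∈ B, ∀ δ < b, discTime L c b δ ≤ b * C.card - 1

/-- `D(c,t)`: the expected number of new discoveries when scanning channel `c` at slot `t`,
i.e. the sum of weights of configurations `(c, b, t mod b)`, `b ∈ B`, not yet
discovered by `L` before slot `t`. -/
noncomputable def gain (C B : Finset ℕ) (L : Set (ℕ × ℕ)) (c t : ℕ) : ℝ :=
  ∑ b ∈ B.filter (fun b => ¬ ∃ t' < t, DiscoveredAt L c b (t % b) t'),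
    weight C B b

/-- A schedule is greedy if, whenever some channel has positive expected gain at slot `t`,
it scans a channel maximizing the expected gain at slot `t`. -/
def Greedy (C B : Finset ℕ) (L : Set (ℕ × ℕ)) : Prop :=
  IsSchedule C L ∧
  ∀ t : ℕ, (∃ c ∈ C, 0 < gain C B L c t) →
    ∃ c ∈ C, (c, t) ∈ L ∧ ∀ c' ∈ C, gain C B L c' t ≤ gain C B L c t

/-!
Scan the channels one after another, each for `max B` consecutive slots. A block of `max B` slots
meets every residue modulo every `b ∈ B`, so this schedule has discovered every configuration by
slot `max B * |C| - 1`, and its NDoT curve has there reached the total weight. An NDoT-optimal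
schedule must reach the total weight by the same slot, and since all weights are positive this
forces it to have discovered every configuration.
-/

/-- The set `L` discovers every configuration of `K_BC` at some slot `≤ T`; for schedules and
`T = max B * |C| - 1` this is WDT-optimality. -/
def DiscoversAllBy (C B : Finset ℕ) (L : Set (ℕ × ℕ)) (T : ℕ) : Prop :=
  ∀ c ∈ C, ∀ b ∈ B, ∀ δ < b, ∃ t ≤ T, DiscoveredAt L c b δ t

/-- The schedule scanning the channels of `C` in increasing order, each for `m` consecutive slots:
the `i`-th channel occupies the slots `t` with `t / m = i`. After the last block no channel is
scanned. (For `m = 0`, as `t / 0 = 0`, the first channel is scanned forever.) -/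
def blockSchedule (C : Finset ℕ) (m : ℕ) : Set (ℕ × ℕ) :=
  {p | ∃ i : Fin C.card, C.orderEmbOfFin rfl i = p.1 ∧ p.2 / m = i}

section

variable {C B : Finset ℕ} {L L' : Set (ℕ × ℕ)} {T : ℕ}

theorem DiscoversAllBy.complete (h : DiscoversAllBy C B L T) : Complete C B L :=
  fun c hc b hb δ hδ =>
    let ⟨t, _, ht⟩ := h c hc b hb δ hδ
    ⟨t, ht⟩

theorem DiscoversAllBy.discTime_le (h : DiscoversAllBy C B L T) {c b δ : ℕ}
    (hc : c ∈ C) (hb : b ∈ B) (hδ : δ < b) : discTime L c b δ ≤ T :=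
  let ⟨_, htT, ht⟩ := h c hc b hb δ hδ
  (Nat.sInf_le ht).trans htT

theorem mem_KBC {c b δ : ℕ} : (c, b, δ) ∈ KBC C B ↔ c ∈ C ∧ b ∈ B ∧ δ < b := by
  simp only [KBC, Finset.mem_filter, Finset.mem_product, Finset.mem_range]
  constructor
  · rintro ⟨⟨hc, hb, -⟩, hδ⟩
    exact ⟨hc, hb, hδ⟩
  · rintro ⟨hc, hb, hδ⟩
    exact ⟨⟨hc, hb, hδ.trans_le (Finset.le_sup (f := id) hb)⟩, hδ⟩

theorem weight_pos_of_mem_KBC {κ : ℕ × ℕ × ℕ} (hκ : κ ∈ KBC C B) : 0 < weight C B κ.2.1 := by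
  obtain ⟨hc, hb, hδ⟩ := mem_KBC.1 hκ
  have hb_pos : 0 < κ.2.1 := Nat.zero_lt_of_lt hδ
  have hB_pos : 0 < B.card := Finset.card_pos.2 ⟨_, hb⟩
  have hC_pos : 0 < C.card := Finset.card_pos.2 ⟨_, hc⟩
  unfold weight
  positivity

theorem sum_weight_le_discSum_iff :
    ∑ κ ∈ KBC C B, weight C B κ.2.1 ≤ discSum C B L T ↔ DiscoversAllBy C B L T := by
  constructor
  · intro hle c hc b hb δ hδ
    have hκ : (c, b, δ) ∈ KBC C B := mem_KBC.2 ⟨hc, hb, hδ⟩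
    by_contra hundiscovered
    refine hle.not_gt (Finset.sum_lt_sum_of_subset (Finset.filter_subset _ _) hκ ?_
      (weight_pos_of_mem_KBC hκ) fun κ' hκ' _ => (weight_pos_of_mem_KBC hκ').le)
    exact fun hmem => hundiscovered (Finset.mem_filter.1 hmem).2
  · intro h
    rw [discSum, Finset.filter_true_of_mem]
    rintro ⟨c, b, δ⟩ hκ
    obtain ⟨hc, hb, hδ⟩ := mem_KBC.1 hκ
    exact h c hc b hb δ hδ

theorem DiscoversAllBy.of_discSum_le (h : DiscoversAllBy C B L' T)
    (hle : discSum C B L' T ≤ discSum C B L T) : DiscoversAllBy C B L T :=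
  sum_weight_le_discSum_iff.1 ((sum_weight_le_discSum_iff.2 h).trans hle)

theorem isSchedule_blockSchedule (C : Finset ℕ) (m : ℕ) : IsSchedule C (blockSchedule C m) := by
  constructor
  · rintro p ⟨i, hi, -⟩
    exact hi ▸ C.orderEmbOfFin_mem rfl i
  · rintro c c' t ⟨i, rfl, hti⟩ ⟨j, rfl, htj⟩
    rw [Fin.ext (hti.symm.trans htj)]

theorem exists_mem_Ico_mod_eq (s : ℕ) {b δ : ℕ} (hδ : δ < b) :
    ∃ t ∈ Finset.Ico s (s + b), t % b = δ := by
  rw [← Finset.mem_image, Nat.image_Ico_mod]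
  exact Finset.mem_range.2 hδ

theorem discoversAllBy_blockSchedule {m : ℕ} (hm : ∀ b ∈ B, b ≤ m) :
    DiscoversAllBy C B (blockSchedule C m) (m * C.card - 1) := by
  intro c hc b hb δ hδ
  obtain ⟨i, rfl⟩ : c ∈ Set.range (C.orderEmbOfFin rfl) := by
    rwa [Finset.range_orderEmbOfFin]
  obtain ⟨t, ht, htδ⟩ := exists_mem_Ico_mod_eq (i * m) hδ
  obtain ⟨hit, hti⟩ := Finset.mem_Ico.1 ht
  have ht_lt : t < (i + 1) * m := by linarith [hm b hb]
  have hblock : (i + 1) * m ≤ m * C.card :=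
    (Nat.mul_le_mul_right m i.isLt).trans_eq (Nat.mul_comm _ _)
  exact ⟨t, by omega, ⟨i, rfl, Nat.div_eq_of_lt_le hit ht_lt⟩, htδ⟩

end

theorem stmt18_general (C B : Finset ℕ) (hB : B.Nonempty) (L : Set (ℕ × ℕ))
    (hopt : ∀ L' : Set (ℕ × ℕ), IsSchedule C L' →
      discSum C B L' (B.max' hB * C.card - 1) ≤ discSum C B L (B.max' hB * C.card - 1)) :
    Complete C B L ∧
      ∀ c ∈ C, ∀ b ∈ B, ∀ δ < b, discTime L c b δ ≤ B.max' hB * C.card - 1 := by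
  have hblock : DiscoversAllBy C B (blockSchedule C (B.max' hB)) (B.max' hB * C.card - 1) :=
    discoversAllBy_blockSchedule fun b hb => B.le_max' b hb
  have hL : DiscoversAllBy C B L (B.max' hB * C.card - 1) :=
    hblock.of_discSum_le (hopt _ (isSchedule_blockSchedule C _))
  exact ⟨hL.complete, fun _ hc _ hb _ hδ => hL.discTime_le hc hb hδ⟩

/-- every NDoT-optimal schedule is complete and WDT-optimal. -/
theorem stmt18 (C B : Finset ℕ) (hC : C.Nonempty) (hB : B.Nonempty)
    (hBpos : ∀ b ∈ B, 0 < b)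
    (L : Set (ℕ × ℕ)) (hL : IsSchedule C L)
    (hopt : ∀ L' : Set (ℕ × ℕ), IsSchedule C L' →
      ∀ t : ℕ, discSum C B L' t ≤ discSum C B L t) :
    Complete C B L ∧
      ∀ c ∈ C, ∀ b ∈ B, ∀ δ < b, discTime L c b δ ≤ B.max' hB * C.card - 1 :=
  stmt18_general C B hB L fun L' hL' => hopt L' hL' _
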